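/- For every real s > 1 and every real r with 0 < r < 1, the function f(p) = (1/(ζ(s)Γ(s)(1-p)^r)) · [ (s-1) ∫_p^1 (ω-p)^(r-1) (-ln ω)^(s-2) / ω^r dω + (r-1) ∫_p^1 (ω-p)^(r-1) (-ln ω)^(s-1) / ω^r dω ] tends to -∞ as p → 0⁺; consequently, there exists ε > 0 such that f(p) < 0 for all p ∈ (0, ε). In particular, f is a quasi-density (it assumes negative values) rather than a genuine probability density. -/

import Mathlib

open MeasureTheory

/-- The Riemann zeta function for real `s > 1`, defined as `∑_{x=0}^∞ (x+1)^(-s)`. -/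
noncomputable def zetaS (s : ℝ) : ℝ := ∑' x : ℕ, ((x : ℝ) + 1) ^ (-s)


lemma aux_zeta_pos (s : ℝ) (hs : 1 < s) : 0 < zetaS s := by
  unfold zetaS
  have h : Summable (fun x : ℕ => ((x : ℝ) + 1) ^ (-s)) := by
    have h1 := (summable_nat_add_iff 1).2 (Real.summable_nat_rpow.2 (by linarith : -s < -1))
    simpa using h1
  refine h.tsum_pos (fun i => by positivity) 0 (by simp)

lemma aux_log_int (q : ℝ) (hq : -1 < q) (m : ℝ) (hm : 0 < m) (hm1 : m < 1) :
    IntegrableOn (fun ω : ℝ => (-Real.log ω) ^ q) (Set.Ioo m 1) := by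
  by_cases h0 : 0 ≤ q
  · have : ContinuousOn (fun ω : ℝ => (-Real.log ω) ^ q) (Set.Icc m 1) := by
      apply ContinuousOn.rpow_const
      · apply ContinuousOn.neg
        apply Real.continuousOn_log.mono
        intro x hx
        simp only [Set.mem_compl_iff, Set.mem_singleton_iff]
        linarith [hx.1]
      · intros; exact Or.inr h0
    exact (this.integrableOn_compact isCompact_Icc).mono_set Set.Ioo_subset_Icc_self
  · have h1 : IntegrableOn (fun ω : ℝ => (1 - ω) ^ q) (Set.Ioo m 1) := by
      have h2 : IntervalIntegrable (fun x : ℝ => x ^ q) volume 0 (1 - m) :=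
        intervalIntegral.intervalIntegrable_rpow' hq
      have h3 := (h2.comp_sub_left 1).symm
      simp only [sub_zero, sub_sub_cancel] at h3
      exact ((intervalIntegrable_iff_integrableOn_Ioc_of_le hm1.le).1 h3).mono_set
        Set.Ioo_subset_Ioc_self
    refine Integrable.mono' h1 ?_ ?_
    · exact ((Real.measurable_log.neg).pow_const q).aestronglyMeasurable
    · refine (ae_restrict_iff' measurableSet_Ioo).2 (Filter.Eventually.of_forall ?_)
      intro x hx
      have hx0 : 0 < x := hm.trans hx.1
      have hl : 1 - x ≤ -Real.log x := by linarith [Real.log_le_sub_one_of_pos hx0]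
      have h1x : 0 < 1 - x := by linarith [hx.2]
      rw [Real.norm_of_nonneg (Real.rpow_nonneg (by linarith) _)]
      exact Real.rpow_le_rpow_of_nonpos h1x hl (by linarith)

lemma aux_int (q : ℝ) (hq : -1 < q) (r : ℝ) (hr0 : 0 < r) (p : ℝ) (hp : 0 < p)
    (hp1 : p < 1) :
    IntegrableOn (fun ω : ℝ => (ω - p) ^ (r - 1) * (-Real.log ω) ^ q / ω ^ r)
      (Set.Ioo p 1) := by
  obtain ⟨m, hpm, hm1⟩ := exists_between hp1
  have hm0 : 0 < m := hp.trans hpm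
  have hA : IntegrableOn (fun ω : ℝ => (ω - p) ^ (r - 1) * (-Real.log ω) ^ q / ω ^ r)
      (Set.Ioc p m) := by
    have h2 : IntervalIntegrable (fun x : ℝ => x ^ (r - 1)) volume 0 (m - p) :=
      intervalIntegral.intervalIntegrable_rpow' (by linarith)
    have h3 := h2.comp_sub_right p
    simp only [zero_add, sub_add_cancel] at h3
    have h4 := (intervalIntegrable_iff_integrableOn_Icc_of_le hpm.le).1 h3
    have hc : ContinuousOn (fun ω : ℝ => (-Real.log ω) ^ q / ω ^ r) (Set.Icc p m) := by
      intro x hx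
      have hx0 : 0 < x := hp.trans_le hx.1
      have hl : Real.log x < 0 := Real.log_neg hx0 (hx.2.trans_lt hm1)
      apply ContinuousAt.continuousWithinAt
      apply ContinuousAt.div
      · exact ContinuousAt.rpow_const (Real.continuousAt_log hx0.ne').neg (Or.inl (by linarith))
      · exact ContinuousAt.rpow_const continuousAt_id (Or.inl hx0.ne')
      · positivity
    have h5 := (h4.mul_continuousOn hc isCompact_Icc).mono_set
      (Set.Ioc_subset_Icc_self)
    refine h5.congr_fun (fun x _ => ?_) measurableSet_Ioc
    simp only [mul_div_assoc]
  have hB : IntegrableOn (fun ω : ℝ => (ω - p) ^ (r - 1) * (-Real.log ω) ^ q / ω ^ r)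
      (Set.Ioo m 1) := by
    have h4 := (integrableOn_Icc_iff_integrableOn_Ioo (μ := volume)).2 (aux_log_int q hq m hm0 hm1)
    have hc : ContinuousOn (fun ω : ℝ => (ω - p) ^ (r - 1) / ω ^ r) (Set.Icc m 1) := by
      intro x hx
      have hx0 : 0 < x := hm0.trans_le hx.1
      have hxp : 0 < x - p := by linarith [hx.1]
      apply ContinuousAt.continuousWithinAt
      apply ContinuousAt.div
      · exact ContinuousAt.rpow_const (by fun_prop) (Or.inl hxp.ne')
      · exact ContinuousAt.rpow_const continuousAt_id (Or.inl hx0.ne')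
      · positivity
    have h5 := (h4.mul_continuousOn hc isCompact_Icc).mono_set
      (Set.Ioo_subset_Icc_self)
    refine h5.congr_fun (fun x _ => ?_) measurableSet_Ioo
    simp only
    ring
  rw [← Set.Ioc_union_Ioo_eq_Ioo hpm.le hm1]
  exact hA.union hB

lemma aux_tendsto (s : ℝ) (hs : 1 < s) (r : ℝ) (hr0 : 0 < r) (hr1 : r < 1) :
    Filter.Tendsto
      (fun p : ℝ => ((s - 1) *
              (∫ ω in Set.Ioo p 1,
                (ω - p) ^ (r - 1) * (-Real.log ω) ^ (s - 2) / ω ^ r) +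
            (r - 1) *
              (∫ ω in Set.Ioo p 1,
                (ω - p) ^ (r - 1) * (-Real.log ω) ^ (s - 1) / ω ^ r)))
      (nhdsWithin 0 (Set.Ioi 0)) Filter.atBot := by
  obtain ⟨M, hM⟩ : ∃ M, M = 2 * (s - 1) / (1 - r) := ⟨_, rfl⟩
  have h1r : 0 < 1 - r := by linarith
  have hM0 : 0 < M := by rw [hM]; apply div_pos <;> linarith
  have hM' : (1 - r) * M = 2 * (s - 1) := by rw [hM]; field_simp
  obtain ⟨δ, hδ⟩ : ∃ δ, δ = Real.exp (-M) := ⟨_, rfl⟩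
  have hδ0 : 0 < δ := hδ ▸ Real.exp_pos _
  have hδ1 : δ < 1 := by rw [hδ, Real.exp_lt_one_iff]; linarith
  have hlogδ : Real.log δ = -M := by rw [hδ, Real.log_exp]
  obtain ⟨c, hc⟩ : ∃ c, c = (1 - r) / 2 * M ^ (s - 1) := ⟨_, rfl⟩
  have hc0 : 0 < c := by rw [hc]; positivity
  obtain ⟨K, hK⟩ : ∃ K, K = (δ / 2) ^ (r - 1) / δ ^ r * (s - 1) := ⟨_, rfl⟩
  have hlim : Filter.Tendsto (fun p : ℝ => c * Real.log p +
      (c * M + ∫ ω in Set.Ioo δ 1, K * (-Real.log ω) ^ (s - 2)))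
      (nhdsWithin 0 (Set.Ioi 0)) Filter.atBot := by
    apply Filter.tendsto_atBot_add_const_right
    exact (Real.tendsto_log_nhdsGT_zero).const_mul_atBot hc0
  refine Filter.tendsto_atBot_mono' _ ?_ hlim
  have hev : Set.Ioo 0 (δ / 2) ∈ nhdsWithin (0:ℝ) (Set.Ioi 0) :=
    Ioo_mem_nhdsGT (by positivity)
  filter_upwards [hev] with p hp
  obtain ⟨hp0, hpδ⟩ := hp
  have hpδ' : p < δ := by linarith
  have hp1 : p < 1 := by linarith
  have hA := aux_int (s - 2) (by linarith) r hr0 p hp0 hp1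
  have hB := aux_int (s - 1) (by linarith) r hr0 p hp0 hp1
  rw [← integral_const_mul, ← integral_const_mul,
    ← integral_add (hA.const_mul _) (hB.const_mul _)]
  have hH : IntegrableOn (fun ω : ℝ =>
      (s - 1) * ((ω - p) ^ (r - 1) * (-Real.log ω) ^ (s - 2) / ω ^ r) +
      (r - 1) * ((ω - p) ^ (r - 1) * (-Real.log ω) ^ (s - 1) / ω ^ r)) (Set.Ioo p 1) :=
    (hA.const_mul (s - 1)).add (hB.const_mul (r - 1))
  rw [← Set.Ioc_union_Ioo_eq_Ioo hpδ'.le hδ1] at hH ⊢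
  have hH1 := IntegrableOn.mono_set hH Set.subset_union_left
  have hH2 := IntegrableOn.mono_set hH Set.subset_union_right
  rw [setIntegral_union (by
    rw [Set.disjoint_left]; intro x hx hx'; exact absurd hx.2 (not_le.2 hx'.1))
    measurableSet_Ioo hH1 hH2]
  have hlogint : IntervalIntegrable (fun x : ℝ => -c * x⁻¹) volume p δ := by
    apply ContinuousOn.intervalIntegrable
    rw [Set.uIcc_of_le hpδ'.le]
    apply ContinuousOn.mul continuousOn_const
    apply continuousOn_inv₀.mono
    intro x hx
    simp only [Set.mem_compl_iff, Set.mem_singleton_iff]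
    linarith [hx.1]
  have hval : ∫ x in Set.Ioc p δ, -c * x⁻¹ = c * Real.log p + c * M := by
    rw [← intervalIntegral.integral_of_le hpδ'.le, intervalIntegral.integral_const_mul,
      integral_inv_of_pos hp0 hδ0, Real.log_div hδ0.ne' hp0.ne', hlogδ]
    ring
  rw [← add_assoc, ← hval]
  have key : ∀ ω : ℝ, p < ω → ω < 1 →
      (s - 1) * ((ω - p) ^ (r - 1) * (-Real.log ω) ^ (s - 2) / ω ^ r) +
      (r - 1) * ((ω - p) ^ (r - 1) * (-Real.log ω) ^ (s - 1) / ω ^ r) =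
      ((ω - p) ^ (r - 1) / ω ^ r) * ((-Real.log ω) ^ (s - 2) *
        ((s - 1) - (1 - r) * (-Real.log ω))) := by
    intro ω h1 h2
    have hl : 0 < -Real.log ω := by linarith [Real.log_neg (hp0.trans h1) h2]
    have : (-Real.log ω) ^ (s - 1) = (-Real.log ω) ^ (s - 2) * (-Real.log ω) := by
      rw [← Real.rpow_add_one hl.ne']; congr 1; ring
    rw [this]; ring
  apply add_le_add
  · refine setIntegral_mono_on hH1 ((intervalIntegrable_iff_integrableOn_Ioc_of_le hpδ'.le).1 hlogint)
      measurableSet_Ioc ?_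
    intro ω hω
    have hω0 : 0 < ω := hp0.trans hω.1
    have hω1 : ω < 1 := hω.2.trans_lt hδ1
    rw [key ω hω.1 hω1]
    have hl : M ≤ -Real.log ω := by
      have := Real.log_le_log hω0 hω.2
      linarith
    have hl0 : 0 < -Real.log ω := by linarith
    have e : (-Real.log ω) ^ (s - 1) = (-Real.log ω) ^ (s - 2) * (-Real.log ω) := by
      rw [← Real.rpow_add_one hl0.ne']; congr 1; ring
    have hpow : M ^ (s - 1) ≤ (-Real.log ω) ^ (s - 1) :=
      Real.rpow_le_rpow hM0.le hl (by linarith)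
    have hX : (-Real.log ω) ^ (s - 2) * ((s - 1) - (1 - r) * (-Real.log ω)) ≤ -c := by
      have h1 : (s - 1) - (1 - r) * (-Real.log ω) ≤ -((1 - r) / 2 * (-Real.log ω)) := by
        nlinarith
      have h2 := mul_le_mul_of_nonneg_left h1 (Real.rpow_nonneg hl0.le (s - 2))
      have h3 := mul_le_mul_of_nonneg_left hpow (by linarith : 0 ≤ (1 - r) / 2)
      rw [e] at h3
      rw [hc]
      linarith
    have hg : ω⁻¹ ≤ (ω - p) ^ (r - 1) / ω ^ r := by
      have h1 : ω ^ (r - 1) ≤ (ω - p) ^ (r - 1) :=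
        Real.rpow_le_rpow_of_nonpos (by linarith [hω.1]) (by linarith) (by linarith)
      rw [le_div_iff₀ (by positivity)]
      refine le_trans (le_of_eq ?_) h1
      rw [Real.rpow_sub_one hω0.ne']; field_simp
    have hg0 : 0 < ω⁻¹ := by positivity
    calc _ ≤ ((ω - p) ^ (r - 1) / ω ^ r) * (-c) :=
          mul_le_mul_of_nonneg_left hX (hg0.le.trans hg)
      _ ≤ -c * ω⁻¹ := by nlinarith
  · refine setIntegral_mono_on hH2 ((aux_log_int (s - 2) (by linarith) δ hδ0 hδ1).const_mul K)
      measurableSet_Ioo ?_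
    intro ω hω
    have hω0 : 0 < ω := hδ0.trans hω.1
    rw [key ω (by linarith [hω.1]) hω.2]
    have hl0 : 0 < -Real.log ω := by linarith [Real.log_neg hω0 hω.2]
    have hL : 0 ≤ (-Real.log ω) ^ (s - 2) := Real.rpow_nonneg hl0.le _
    have hg : (ω - p) ^ (r - 1) / ω ^ r ≤ (δ / 2) ^ (r - 1) / δ ^ r := by
      apply div_le_div₀ (by positivity) _ (by positivity)
      · exact Real.rpow_le_rpow hδ0.le hω.1.le hr0.le
      · exact Real.rpow_le_rpow_of_nonpos (by positivity) (by linarith [hω.1]) (by linarith)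
    have hg0 : 0 ≤ (ω - p) ^ (r - 1) / ω ^ r :=
      div_nonneg (Real.rpow_nonneg (by linarith [hω.1]) _) (by positivity)
    calc _ ≤ ((ω - p) ^ (r - 1) / ω ^ r) * ((-Real.log ω) ^ (s - 2) * (s - 1)) := by
          apply mul_le_mul_of_nonneg_left _ hg0
          apply mul_le_mul_of_nonneg_left _ hL
          nlinarith
      _ ≤ ((δ / 2) ^ (r - 1) / δ ^ r) * ((-Real.log ω) ^ (s - 2) * (s - 1)) := by
          apply mul_le_mul_of_nonneg_right hg
          exact mul_nonneg hL (by linarith)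
      _ = _ := by rw [hK]; ring

/-- For `s > 1` and `0 < r < 1`, the mixing quasi-density tends to `-∞` as
`p → 0⁺`, so it is negative on some interval `(0, ε)`; hence it is a
quasi-density rather than a genuine probability density. -/
theorem negBinomial_mixing_quasi_density_neg_near_zero (s : ℝ) (hs : 1 < s)
    (r : ℝ) (hr0 : 0 < r) (hr1 : r < 1) :
    Filter.Tendsto
      (fun p : ℝ =>
        (1 / (zetaS s * Real.Gamma s * (1 - p) ^ r)) *
          ((s - 1) *
              (∫ ω in Set.Ioo p 1,
                (ω - p) ^ (r - 1) * (-Real.log ω) ^ (s - 2) / ω ^ r) +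
            (r - 1) *
              (∫ ω in Set.Ioo p 1,
                (ω - p) ^ (r - 1) * (-Real.log ω) ^ (s - 1) / ω ^ r)))
      (nhdsWithin 0 (Set.Ioi 0)) Filter.atBot ∧
    ∃ ε > (0 : ℝ), ∀ p ∈ Set.Ioo (0 : ℝ) ε,
      (1 / (zetaS s * Real.Gamma s * (1 - p) ^ r)) *
          ((s - 1) *
              (∫ ω in Set.Ioo p 1,
                (ω - p) ^ (r - 1) * (-Real.log ω) ^ (s - 2) / ω ^ r) +
            (r - 1) *
              (∫ ω in Set.Ioo p 1,
                (ω - p) ^ (r - 1) * (-Real.log ω) ^ (s - 1) / ω ^ r)) < 0 := by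
  refine (fun hA hB => ⟨hA, hB hA⟩ : ∀ {P Q : Prop}, P → (P → Q) → P ∧ Q) ?_ ?_
  rotate_left
  · intro h
    have h1 := h.eventually (Filter.eventually_lt_atBot 0)
    obtain ⟨ε, hε, hsub⟩ := mem_nhdsGT_iff_exists_Ioo_subset.1 h1
    exact ⟨ε, hε, fun p hp => hsub hp⟩
  · have hz := aux_zeta_pos s hs
    have hG : 0 < Real.Gamma s := Real.Gamma_pos_of_pos (by linarith)
    have hC : 0 < 1 / (zetaS s * Real.Gamma s * (1 - 0) ^ r) := by
      rw [sub_zero, Real.one_rpow]; positivity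
    refine Filter.Tendsto.pos_mul_atBot hC ?_ (aux_tendsto s hs r hr0 hr1)
    apply Filter.Tendsto.mono_left _ nhdsWithin_le_nhds
    have : ContinuousAt (fun p : ℝ => 1 / (zetaS s * Real.Gamma s * (1 - p) ^ r)) 0 := by
      apply ContinuousAt.div continuousAt_const
      · apply ContinuousAt.mul continuousAt_const
        exact ContinuousAt.rpow_const (by fun_prop) (Or.inl (by norm_num))
      · rw [sub_zero, Real.one_rpow]; positivity
    exact this
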